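/- arXiv:2006.12105 — 2 statements merged into one kernel-verified Lean document; each statement's English description precedes it below -/
import Mathlib

section
/- Let f be an inner function with f(0)=0 and let f^n denote the n-th iterate. For positive integers k < j, the integral over the unit circle of conj(f^k)·f^j with respect to normalized Lebesgue measure equals f'(0)^{j-k}. -/
/-
For `‖w‖ ≤ 1 / 2`, let `J w` be the measure `(1 + 2 * Re (w * conj z)) dm`, the first-order Taylor
polynomial in `w` of the Poisson measure at `w`.  If `h` is bounded and holomorphic on the disc with
boundary function `H`, then `∫ H dJ w = h 0 + h'(0) * w`.  Applied to the powers of an inner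
function `f` with `f 0 = 0`, this shows that the boundary map `F` pushes `J w` forward to a measure
with the moments of `J (f'(0) * w)`, hence to `J (f'(0) * w)` itself: boundary maps act on these
measures through the derivative at the origin.  Iterating, `F^[n]` pushes `J w` to
`J (f'(0) ^ n * w)`.  The case `w = 0` says that `m` is invariant, which reduces the correlation of
`F^[k]` and `F^[j]` to `∫ conj z * F^[j - k] z dm`, and this integral is read off from
`∫ F^[j - k] dJ w`.
-/

open MeasureTheory Set Metric Filter Complex

/-- Normalized Lebesgue (arc-length) measure on the unit circle, as a measure on ℂ. -/
noncomputable def m : Measure ℂ :=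
  (ENNReal.ofReal (2 * Real.pi))⁻¹ •
    (Measure.map (fun θ : ℝ => Complex.exp ((θ : ℂ) * Complex.I))
      (volume.restrict (Set.Ioc (0:ℝ) (2 * Real.pi))))

/-- `spow F ε n` is `F^[n]` if `ε = 1` and its complex conjugate if `ε = -1`. -/
noncomputable def spow (F : ℂ → ℂ) (ε : ℤ) (n : ℕ) (z : ℂ) : ℂ :=
  if ε = 1 then F^[n] z else (starRingEnd ℂ) (F^[n] z)

open scoped Topology ComplexConjugate Real

section Moments

theorem measure_addCircle_ext_of_integral_fourier {T : ℝ} [Fact (0 < T)]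
    {μ ν : Measure (AddCircle T)} [IsFiniteMeasure μ] [IsFiniteMeasure ν]
    (h : ∀ n : ℤ, ∫ x, fourier n x ∂μ = ∫ x, fourier n x ∂ν) : μ = ν := by
  have integrable (φ : C(AddCircle T, ℂ)) (ρ : Measure (AddCircle T)) [IsFiniteMeasure ρ] :
      Integrable φ ρ :=
    φ.continuous.integrable_of_hasCompactSupport (HasCompactSupport.of_compactSpace φ)
  have eq_on_span : ∀ φ ∈ Submodule.span ℂ (range (fourier (T := T))),
      ∫ x, φ x ∂μ = ∫ x, φ x ∂ν := by
    intro φ hφ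
    induction hφ using Submodule.span_induction with
    | mem φ hφ =>
      obtain ⟨n, rfl⟩ := hφ
      exact h n
    | zero => simp
    | add φ ψ _ _ hφ hψ =>
      simp only [ContinuousMap.add_apply]
      rw [integral_add (integrable φ μ) (integrable ψ μ),
        integral_add (integrable φ ν) (integrable ψ ν), hφ, hψ]
    | smul a φ _ hφ => simp only [ContinuousMap.smul_apply, integral_smul, hφ]
  let A := (fourierSubalgebra (T := T)).comap (BoundedContinuousFunction.toContinuousMapStarₐ ℂ)
  have hA : (A.map (BoundedContinuousFunction.toContinuousMapStarₐ ℂ)).SeparatesPoints :=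
    Subalgebra.separatesPoints_monotone
      (fun φ hφ => ⟨BoundedContinuousFunction.mkOfCompact φ, hφ, rfl⟩)
      fourierSubalgebra_separatesPoints
  refine ext_of_forall_mem_subalgebra_integral_eq_of_polish hA fun g hg =>
    eq_on_span g.toContinuousMap ?_
  rw [← fourierSubalgebra_coe]
  exact hg

theorem toCircle_arg {z : ℂ} (hz : ‖z‖ = 1) :
    (AddCircle.toCircle (Complex.arg z : AddCircle (2 * π)) : ℂ) = z := by
  simpa [AddCircle.toCircle_apply_mk, hz] using norm_mul_exp_arg_mul_I z

theorem measure_ext_of_integral_pow {μ ν : Measure ℂ} [IsFiniteMeasure μ] [IsFiniteMeasure ν]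
    (hμ : ∀ᵐ z ∂μ, ‖z‖ = 1) (hν : ∀ᵐ z ∂ν, ‖z‖ = 1)
    (h : ∀ n : ℕ, ∫ z, z ^ n ∂μ = ∫ z, z ^ n ∂ν) : μ = ν := by
  have : Fact (0 < 2 * π) := ⟨Real.two_pi_pos⟩
  let angle : ℂ → AddCircle (2 * π) := fun z => Complex.arg z
  let circle : AddCircle (2 * π) → ℂ := fun x => AddCircle.toCircle x
  have measurable_angle : Measurable angle := AddCircle.measurable_mk'.comp measurable_arg
  have measurable_circle : Measurable circle :=
    (continuous_subtype_val.comp AddCircle.continuous_toCircle).measurable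
  have map_circle_map_angle {ρ : Measure ℂ} (hρ : ∀ᵐ z ∂ρ, ‖z‖ = 1) :
      (ρ.map angle).map circle = ρ := by
    rw [Measure.map_map measurable_circle measurable_angle]
    exact (Measure.map_congr (hρ.mono fun z hz => toCircle_arg hz)).trans Measure.map_id
  have integral_fourier {ρ : Measure ℂ} (hρ : ∀ᵐ z ∂ρ, ‖z‖ = 1) (n : ℕ) :
      ∫ x, fourier n x ∂(ρ.map angle) = ∫ z, z ^ n ∂ρ := by
    rw [integral_map measurable_angle.aemeasurable
      (fourier (n : ℤ)).continuous.aestronglyMeasurable]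
    refine integral_congr_ae (hρ.mono fun z hz => ?_)
    simp [angle, fourier_apply, AddCircle.toCircle_nsmul, toCircle_arg hz]
  have map_angle_eq : μ.map angle = ν.map angle := by
    refine measure_addCircle_ext_of_integral_fourier fun n => ?_
    obtain ⟨n, rfl | rfl⟩ := n.eq_nat_or_neg
    · rw [integral_fourier hμ, integral_fourier hν, h n]
    · simp only [fourier_neg, integral_conj]
      rw [integral_fourier hμ, integral_fourier hν, h n]
  rw [← map_circle_map_angle hμ, map_angle_eq, map_circle_map_angle hν]

end Moments

section CircleAverage

variable {E : Type*} [NormedAddCommGroup E] [NormedSpace ℂ E] [CompleteSpace E] {g : ℂ → E}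

theorem circleAverage_sub_smul {c : ℂ} {R : ℝ} (hg : DiffContOnCl ℂ g (ball c |R|)) :
    Real.circleAverage (fun z => (z - c) • g z) c R = 0 := by
  have hd : DiffContOnCl ℂ (fun z => (z - c) • g z) (ball c |R|) :=
    (differentiable_id.sub_const c).diffContOnCl.smul hg
  simpa using hd.circleAverage

theorem circleAverage_conj_sub_smul {c : ℂ} {R : ℝ} (hg : DiffContOnCl ℂ g (ball c R))
    (hR : 0 < R) :
    Real.circleAverage (fun z => conj (z - c) • g z) c R = (R : ℂ) ^ 2 • deriv g c := by
  have kernel_eq : EqOn (fun z => (z - c)⁻¹ • conj (z - c) • g z)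
      (fun z => (R : ℂ) ^ 2 • (1 / (z - c) ^ 2) • g z) (sphere c R) := by
    intro z hz
    have hz0 : z - c ≠ 0 := sub_ne_zero.2 (ne_of_mem_sphere hz hR.ne')
    have hconj : conj (z - c) * (z - c) = (R : ℂ) ^ 2 := by
      rw [conj_mul', mem_sphere_iff_norm.1 hz]
    simp only [smul_smul, ← hconj]
    congr 1
    field_simp
  rw [Real.circleAverage_eq_circleIntegral hR.ne', circleIntegral.integral_congr hR.le kernel_eq,
    circleIntegral.integral_smul, hg.deriv_eq_smul_circleIntegral hR, smul_comm,
    inv_smul_smul₀ two_pi_I_ne_zero]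

theorem circleAverage_one_add_two_mul_re_smul (hg : DiffContOnCl ℂ g (ball 0 1)) (w : ℂ) :
    Real.circleAverage (fun z => (1 + 2 * (w * conj z).re) • g z) 0 1 = g 0 + w • deriv g 0 := by
  have hg' : DiffContOnCl ℂ g (ball 0 |1|) := by rwa [abs_one]
  have hgc : ContinuousOn g (sphere 0 1) :=
    hg.continuousOn_ball.mono sphere_subset_closedBall
  have expand : (fun z => (1 + 2 * (w * conj z).re) • g z) =
      fun z => g z + w • conj (z - 0) • g z + conj w • (z - 0) • g z := by
    funext z
    rw [← Complex.coe_smul, ← one_smul ℂ (g z)]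
    simp only [smul_smul, ← add_smul, sub_zero]
    push_cast [re_eq_add_conj, map_mul, conj_conj]
    ring_nf
  have h_g : CircleIntegrable g 0 1 := hgc.circleIntegrable zero_le_one
  have h_conj : CircleIntegrable (fun z => w • conj (z - 0) • g z) 0 1 :=
    ContinuousOn.circleIntegrable zero_le_one (by fun_prop)
  have h_id : CircleIntegrable (fun z => conj w • (z - 0) • g z) 0 1 :=
    ContinuousOn.circleIntegrable zero_le_one (by fun_prop)
  have h_add : CircleIntegrable (fun z => g z + w • conj (z - 0) • g z) 0 1 := h_g.add h_conj
  rw [expand, Real.circleAverage_fun_add h_add h_id,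
    Real.circleAverage_fun_add h_g h_conj, Real.circleAverage_fun_smul,
    Real.circleAverage_fun_smul, hg'.circleAverage, circleAverage_conj_sub_smul hg one_pos,
    circleAverage_sub_smul hg']
  simp

end CircleAverage

section Arclength

theorem measurable_exp_ofReal_mul_I : Measurable fun θ : ℝ => exp (θ * I) := by
  fun_prop

instance isProbabilityMeasure_m : IsProbabilityMeasure m := by
  refine ⟨?_⟩
  have two_pi_ne_zero : ENNReal.ofReal (2 * π) ≠ 0 := by simpa using Real.pi_pos
  rw [m, Measure.smul_apply, Measure.map_apply measurable_exp_ofReal_mul_I MeasurableSet.univ]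
  simpa using ENNReal.inv_mul_cancel two_pi_ne_zero ENNReal.ofReal_ne_top

theorem ae_m_norm_eq_one : ∀ᵐ z ∂m, ‖z‖ = 1 := by
  refine Measure.ae_smul_measure ?_ _
  rw [ae_map_iff measurable_exp_ofReal_mul_I.aemeasurable
    (measurableSet_eq_fun measurable_norm measurable_const)]
  exact Eventually.of_forall norm_exp_ofReal_mul_I

variable {E : Type*} [NormedAddCommGroup E]

theorem aestronglyMeasurable_m_of_continuousOn {φ : ℂ → E} (hφ : ContinuousOn φ (sphere 0 1)) :
    AEStronglyMeasurable φ m := by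
  have restrict_sphere : m.restrict (sphere 0 1) = m :=
    Measure.restrict_eq_self_of_ae_mem (by simpa using ae_m_norm_eq_one)
  rw [← restrict_sphere]
  exact hφ.aestronglyMeasurable isClosed_sphere.measurableSet

theorem integrable_m_of_continuousOn {φ : ℂ → E} (hφ : ContinuousOn φ (sphere 0 1)) :
    Integrable φ m := by
  obtain ⟨C, hC⟩ := (isCompact_sphere (0 : ℂ) 1).exists_bound_of_continuousOn hφ
  exact Integrable.of_bound (aestronglyMeasurable_m_of_continuousOn hφ) C
    (ae_m_norm_eq_one.mono fun z hz => hC z (mem_sphere_zero_iff_norm.2 hz))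

theorem integral_m_eq_circleAverage [NormedSpace ℝ E] {φ : ℂ → E}
    (hφ : AEStronglyMeasurable φ m) : ∫ z, φ z ∂m = Real.circleAverage φ 0 1 := by
  have hφ' := hφ.mono_ac
    (Measure.absolutelyContinuous_smul (ENNReal.inv_ne_zero.2 ENNReal.ofReal_ne_top))
  rw [m, integral_smul_measure, integral_map measurable_exp_ofReal_mul_I.aemeasurable hφ',
    Real.circleAverage_def, intervalIntegral.integral_of_le Real.two_pi_pos.le, ENNReal.toReal_inv,
    ENNReal.toReal_ofReal Real.two_pi_pos.le]
  simp [circleMap]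

end Arclength

section PoissonJet

/-- The measure `(1 + 2 * Re (w * conj z)) dm`, the first-order Taylor polynomial in `w` of the
Poisson measure at `w`: integrating the boundary values of `h` against it gives `h 0 + h'(0) * w`.
The density is truncated at zero by `ENNReal.ofReal`, so this is the intended measure only for
`‖w‖ ≤ 1 / 2`. -/
noncomputable def poissonJet (w : ℂ) : Measure ℂ :=
  m.withDensity fun z => ENNReal.ofReal (1 + 2 * (w * conj z).re)

theorem poissonJet_zero : poissonJet 0 = m := by
  simp [poissonJet]

theorem poissonJet_absolutelyContinuous (w : ℂ) : poissonJet w ≪ m :=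
  withDensity_absolutelyContinuous _ _

theorem poissonJet_density_nonneg {w z : ℂ} (hw : ‖w‖ ≤ 1 / 2) (hz : ‖z‖ = 1) :
    0 ≤ 1 + 2 * (w * conj z).re := by
  have h := neg_le_of_abs_le (abs_re_le_norm (w * conj z))
  rw [norm_mul, norm_conj, hz, mul_one] at h
  linarith

theorem ae_poissonJet_norm_eq_one (w : ℂ) : ∀ᵐ z ∂poissonJet w, ‖z‖ = 1 :=
  (poissonJet_absolutelyContinuous w).ae_le ae_m_norm_eq_one

instance isFiniteMeasure_poissonJet (w : ℂ) : IsFiniteMeasure (poissonJet w) :=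
  isFiniteMeasure_withDensity_ofReal
    (integrable_m_of_continuousOn (by fun_prop)).hasFiniteIntegral

theorem integral_poissonJet {E : Type*} [NormedAddCommGroup E] [NormedSpace ℝ E] {w : ℂ}
    (hw : ‖w‖ ≤ 1 / 2) (φ : ℂ → E) :
    ∫ z, φ z ∂poissonJet w = ∫ z, (1 + 2 * (w * conj z).re) • φ z ∂m := by
  rw [poissonJet, integral_withDensity_eq_integral_toReal_smul (by fun_prop) (by simp)]
  refine integral_congr_ae (ae_m_norm_eq_one.mono fun z hz => ?_)
  simp only [ENNReal.toReal_ofReal (poissonJet_density_nonneg hw hz)]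

theorem integral_poissonJet_of_diffContOnCl {E : Type*} [NormedAddCommGroup E] [NormedSpace ℂ E]
    [CompleteSpace E] {g : ℂ → E} (hg : DiffContOnCl ℂ g (ball 0 1)) {w : ℂ}
    (hw : ‖w‖ ≤ 1 / 2) : ∫ z, g z ∂poissonJet w = g 0 + w • deriv g 0 := by
  have hgc : ContinuousOn g (sphere 0 1) := hg.continuousOn_ball.mono sphere_subset_closedBall
  rw [integral_poissonJet hw, integral_m_eq_circleAverage, circleAverage_one_add_two_mul_re_smul hg]
  exact aestronglyMeasurable_m_of_continuousOn
    ((by fun_prop : Continuous fun z => 1 + 2 * (w * conj z).re).continuousOn.smul hgc)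

theorem integral_conj_mul_eq_integral_poissonJet {φ : ℂ → ℂ} (hφ : Integrable φ m) :
    ∫ z, conj z * φ z ∂m =
      ∫ z, φ z ∂poissonJet (1 / 2) - I * ∫ z, φ z ∂poissonJet (I / 2) - (1 - I) * ∫ z, φ z ∂m := by
  have integrable_density_smul (w : ℂ) :
      Integrable (fun z => (1 + 2 * (w * conj z).re) • φ z) m := by
    refine hφ.bdd_smul (1 + 2 * ‖w‖)
      (by fun_prop : Continuous fun z => 1 + 2 * (w * conj z).re).aestronglyMeasurable
      (ae_m_norm_eq_one.mono fun z hz => ?_)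
    have hre : |(w * conj z).re| ≤ ‖w‖ := by simpa [hz] using abs_re_le_norm (w * conj z)
    calc ‖1 + 2 * (w * conj z).re‖
        ≤ ‖(1 : ℝ)‖ + ‖2 * (w * conj z).re‖ := norm_add_le _ _
      _ = 1 + 2 * |(w * conj z).re| := by simp
      _ ≤ 1 + 2 * ‖w‖ := by gcongr
  have polarization (z : ℂ) : conj z * φ z = (1 + 2 * (1 / 2 * conj z).re) • φ z -
      I * ((1 + 2 * (I / 2 * conj z).re) • φ z) - (1 - I) * φ z := by
    simp only [← coe_smul, smul_eq_mul, ofReal_add, ofReal_mul, re_eq_add_conj, map_mul, conj_conj,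
      map_div₀, conj_I, map_one, map_ofNat, ofReal_one, ofReal_ofNat]
    linear_combination (1 / 2 * φ z * conj z - 1 / 2 * φ z * z) * I_sq
  have integrable_sub : Integrable (fun z => (1 + 2 * (1 / 2 * conj z).re) • φ z -
      I * ((1 + 2 * (I / 2 * conj z).re) • φ z)) m :=
    (integrable_density_smul _).sub ((integrable_density_smul _).const_mul I)
  simp only [polarization]
  rw [integral_sub integrable_sub (hφ.const_mul _),
    integral_sub (integrable_density_smul _) ((integrable_density_smul _).const_mul I),
    integral_const_mul, integral_const_mul, integral_poissonJet (by simp),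
    integral_poissonJet (by simp)]

end PoissonJet

section BoundaryFunction

/-- `H` is a boundary function of the bounded holomorphic function `h` on the unit disc: almost
everywhere on the unit circle it is the radial limit of `h`. Values of `H` on null sets and of `h`
outside the disc are arbitrary. -/
structure IsBoundaryFunction (h H : ℂ → ℂ) : Prop where
  differentiableOn : DifferentiableOn ℂ h (ball 0 1)
  exists_norm_le : ∃ C, ∀ z ∈ ball 0 1, ‖h z‖ ≤ C
  tendsto_radial : ∀ᵐ z ∂m, Tendsto (fun r : ℝ => h (r * z)) (𝓝[<] 1) (𝓝 (H z))

theorem diffContOnCl_comp_ofReal_mul {h : ℂ → ℂ} (hh : DifferentiableOn ℂ h (ball 0 1)) {r : ℝ}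
    (hr : r ∈ Ioo 0 1) : DiffContOnCl ℂ (fun z => h (r * z)) (ball 0 1) := by
  refine DifferentiableOn.diffContOnCl_ball (U := closedBall 0 1) ?_ subset_rfl
  refine hh.comp (by fun_prop) fun z hz => ?_
  rw [mem_closedBall_zero_iff] at hz
  rw [mem_ball_zero_iff, norm_mul, norm_real, Real.norm_of_nonneg hr.1.le]
  exact (mul_le_of_le_one_right hr.1.le hz).trans_lt hr.2

namespace IsBoundaryFunction

variable {h H : ℂ → ℂ}

theorem id : IsBoundaryFunction (fun z => z) (fun z => z) where
  differentiableOn := differentiableOn_id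
  exists_norm_le := ⟨1, fun _ hz => (mem_ball_zero_iff.1 hz).le⟩
  tendsto_radial := Eventually.of_forall fun z => by
    have : Continuous fun r : ℝ => (r : ℂ) * z := by fun_prop
    simpa using (this.tendsto 1).mono_left nhdsWithin_le_nhds

theorem pow (hH : IsBoundaryFunction h H) (n : ℕ) :
    IsBoundaryFunction (fun z => h z ^ n) (fun z => H z ^ n) where
  differentiableOn := hH.differentiableOn.pow n
  exists_norm_le := by
    obtain ⟨C, hC⟩ := hH.exists_norm_le
    refine ⟨C ^ n, fun z hz => ?_⟩
    rw [norm_pow]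
    exact pow_le_pow_left₀ (norm_nonneg _) (hC z hz) n
  tendsto_radial := hH.tendsto_radial.mono fun z hz => hz.pow n

theorem aemeasurable (hH : IsBoundaryFunction h H) : AEMeasurable H m := by
  obtain ⟨r, -, hr, hr1⟩ := exists_seq_strictMono_tendsto' (zero_lt_one (α := ℝ))
  have hr1' : Tendsto r atTop (𝓝[<] 1) :=
    tendsto_nhdsWithin_iff.2 ⟨hr1, Eventually.of_forall fun n => (hr n).2⟩
  refine aemeasurable_of_tendsto_metrizable_ae atTop (fun n => ?_)
    (hH.tendsto_radial.mono fun z hz => hz.comp hr1')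
  exact (aestronglyMeasurable_m_of_continuousOn
    ((diffContOnCl_comp_ofReal_mul hH.differentiableOn (hr n)).continuousOn_ball.mono
      sphere_subset_closedBall)).aemeasurable

theorem integral_poissonJet (hH : IsBoundaryFunction h H) {w : ℂ} (hw : ‖w‖ ≤ 1 / 2) :
    ∫ z, H z ∂poissonJet w = h 0 + w * deriv h 0 := by
  have hr : ∀ᶠ r : ℝ in 𝓝[<] 1, r ∈ Ioo (0 : ℝ) 1 := Ioo_mem_nhdsLT one_pos
  have tendsto_integral : Tendsto (fun r : ℝ => ∫ z, h (r * z) ∂poissonJet w) (𝓝[<] 1)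
      (𝓝 (∫ z, H z ∂poissonJet w)) := by
    obtain ⟨C, hC⟩ := hH.exists_norm_le
    refine tendsto_integral_filter_of_dominated_convergence (fun _ => C) ?_ ?_
      (integrable_const C) ((poissonJet_absolutelyContinuous w).ae_le hH.tendsto_radial)
    · filter_upwards [hr] with r hr
      exact (aestronglyMeasurable_m_of_continuousOn
        ((diffContOnCl_comp_ofReal_mul hH.differentiableOn hr).continuousOn_ball.mono
          sphere_subset_closedBall)).mono_ac (poissonJet_absolutelyContinuous w)
    · filter_upwards [hr] with r hr
      filter_upwards [ae_poissonJet_norm_eq_one w] with z hz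
      exact hC _ (by simp [hz, abs_of_pos hr.1, hr.2])
  have tendsto_taylor : Tendsto (fun r : ℝ => h 0 + w * (r * deriv h 0)) (𝓝[<] 1)
      (𝓝 (h 0 + w * deriv h 0)) := by
    have : Continuous fun r : ℝ => h 0 + w * (r * deriv h 0) := by fun_prop
    simpa using (this.tendsto 1).mono_left nhdsWithin_le_nhds
  refine tendsto_nhds_unique tendsto_integral (tendsto_taylor.congr' ?_)
  filter_upwards [hr] with r hr
  rw [integral_poissonJet_of_diffContOnCl (diffContOnCl_comp_ofReal_mul hH.differentiableOn hr) hw,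
    deriv_comp_mul_left]
  simp

end IsBoundaryFunction

end BoundaryFunction

section InnerFunction

/-- `f` is an inner function: a holomorphic self-map of the unit disc whose radial limits are
almost everywhere unimodular. `F` is a choice of boundary function for `f`. -/
structure IsInnerFunction (f F : ℂ → ℂ) : Prop where
  differentiableOn : DifferentiableOn ℂ f (ball 0 1)
  mapsTo : MapsTo f (ball 0 1) (ball 0 1)
  tendsto_radial : ∀ᵐ z ∂m, Tendsto (fun r : ℝ => f (r * z)) (𝓝[<] 1) (𝓝 (F z))
  norm_eq_one : ∀ᵐ z ∂m, ‖F z‖ = 1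

namespace IsInnerFunction

variable {f F : ℂ → ℂ}

theorem isBoundaryFunction (hf : IsInnerFunction f F) : IsBoundaryFunction f F where
  differentiableOn := hf.differentiableOn
  exists_norm_le := ⟨1, fun _ hz => (mem_ball_zero_iff.1 (hf.mapsTo hz)).le⟩
  tendsto_radial := hf.tendsto_radial

theorem norm_deriv_zero_pow_mul_le (hf : IsInnerFunction f F) (h0 : f 0 = 0) (n : ℕ) {w : ℂ}
    {r : ℝ} (hw : ‖w‖ ≤ r) : ‖deriv f 0 ^ n * w‖ ≤ r := by
  have schwarz : ‖deriv f 0‖ ≤ 1 := by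
    refine norm_deriv_le_one_of_mapsTo_ball hf.differentiableOn ?_ one_pos
    rw [h0]
    exact hf.mapsTo.mono_right ball_subset_closedBall
  rw [norm_mul, norm_pow]
  exact (mul_le_of_le_one_left (norm_nonneg w) (pow_le_one₀ (norm_nonneg _) schwarz)).trans hw

theorem aemeasurable_poissonJet (hf : IsInnerFunction f F) (w : ℂ) :
    AEMeasurable F (poissonJet w) :=
  hf.isBoundaryFunction.aemeasurable.mono_ac (poissonJet_absolutelyContinuous w)

theorem map_poissonJet (hf : IsInnerFunction f F) (h0 : f 0 = 0) {w : ℂ} (hw : ‖w‖ ≤ 1 / 2) :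
    (poissonJet w).map F = poissonJet (deriv f 0 * w) := by
  have hF := hf.aemeasurable_poissonJet w
  have hfw : ‖deriv f 0 * w‖ ≤ 1 / 2 := by simpa using hf.norm_deriv_zero_pow_mul_le h0 1 hw
  have hfd : DifferentiableAt ℂ f 0 :=
    hf.differentiableOn.differentiableAt (ball_mem_nhds 0 one_pos)
  refine measure_ext_of_integral_pow ?_ (ae_poissonJet_norm_eq_one _) fun n => ?_
  · rw [ae_map_iff hF (measurableSet_eq_fun measurable_norm measurable_const)]
    exact (poissonJet_absolutelyContinuous w).ae_le hf.norm_eq_one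
  · rw [integral_map hF (by fun_prop), (hf.isBoundaryFunction.pow n).integral_poissonJet hw,
      (IsBoundaryFunction.id.pow n).integral_poissonJet hfw, deriv_fun_pow hfd,
      deriv_fun_pow differentiableAt_fun_id, deriv_id'', h0]
    ring

theorem iterate_map_poissonJet (hf : IsInnerFunction f F) (h0 : f 0 = 0) (n : ℕ) {w : ℂ}
    (hw : ‖w‖ ≤ 1 / 2) :
    AEMeasurable F^[n] (poissonJet w) ∧
      (poissonJet w).map F^[n] = poissonJet (deriv f 0 ^ n * w) := by
  induction n generalizing w with
  | zero => simp [aemeasurable_id]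
  | succ n ih =>
    have hfw : ‖deriv f 0 * w‖ ≤ 1 / 2 := by simpa using hf.norm_deriv_zero_pow_mul_le h0 1 hw
    have hF := hf.aemeasurable_poissonJet w
    obtain ⟨aemeasurable_n, map_n⟩ := ih hfw
    rw [← hf.map_poissonJet h0 hw] at aemeasurable_n map_n
    rw [Function.iterate_succ, ← AEMeasurable.map_map_of_aemeasurable aemeasurable_n hF, map_n,
      pow_succ, mul_assoc]
    exact ⟨aemeasurable_n.comp_aemeasurable hF, rfl⟩

theorem aemeasurable_iterate (hf : IsInnerFunction f F) (h0 : f 0 = 0) (n : ℕ) :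
    AEMeasurable F^[n] m := by
  simpa [poissonJet_zero] using (hf.iterate_map_poissonJet h0 n (w := 0) (by simp)).1

theorem map_iterate (hf : IsInnerFunction f F) (h0 : f 0 = 0) (n : ℕ) : m.map F^[n] = m := by
  simpa [poissonJet_zero] using (hf.iterate_map_poissonJet h0 n (w := 0) (by simp)).2

theorem integral_iterate_poissonJet (hf : IsInnerFunction f F) (h0 : f 0 = 0) (n : ℕ) {w : ℂ}
    (hw : ‖w‖ ≤ 1 / 2) : ∫ z, F^[n] z ∂poissonJet w = deriv f 0 ^ n * w := by
  obtain ⟨aemeasurable_n, map_n⟩ := hf.iterate_map_poissonJet h0 n hw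
  rw [← integral_map (f := fun z => z) aemeasurable_n (by fun_prop), map_n,
    IsBoundaryFunction.id.integral_poissonJet (hf.norm_deriv_zero_pow_mul_le h0 n hw)]
  simp

theorem integral_conj_mul_iterate (hf : IsInnerFunction f F) (h0 : f 0 = 0) (n : ℕ) :
    ∫ z, conj z * F^[n] z ∂m = deriv f 0 ^ n := by
  have integrable_iterate : Integrable F^[n] m := by
    have integrable_id : Integrable (fun z => z) (m.map F^[n]) := by
      rw [hf.map_iterate h0]
      exact integrable_m_of_continuousOn continuousOn_id
    exact integrable_id.comp_aemeasurable (hf.aemeasurable_iterate h0 n)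
  rw [integral_conj_mul_eq_integral_poissonJet integrable_iterate, ← poissonJet_zero]
  simp only [hf.integral_iterate_poissonJet h0 n (w := 1 / 2) (by simp),
    hf.integral_iterate_poissonJet h0 n (w := I / 2) (by simp),
    hf.integral_iterate_poissonJet h0 n (w := 0) (by simp)]
  linear_combination (-deriv f 0 ^ n / 2) * I_sq

end IsInnerFunction

end InnerFunction

theorem stmt1 (f F : ℂ → ℂ)
    (hf : DifferentiableOn ℂ f (Metric.ball 0 1))
    (hmap : Set.MapsTo f (Metric.ball 0 1) (Metric.ball 0 1))
    (h0 : f 0 = 0)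
    (hbd : ∀ᵐ z ∂m, Filter.Tendsto (fun r : ℝ => f ((r : ℂ) * z))
      (nhdsWithin 1 (Set.Iio 1)) (nhds (F z)))
    (hinner : ∀ᵐ z ∂m, ‖F z‖ = 1)
    (k j : ℕ) (hk : 0 < k) (hkj : k < j) :
    ∫ z, (starRingEnd ℂ) (F^[k] z) * F^[j] z ∂m = (deriv f 0) ^ (j - k) := by
  have hF : IsInnerFunction f F := ⟨hf, hmap, hbd, hinner⟩
  have measurable_integrand :
      AEStronglyMeasurable (fun z => conj z * F^[j - k] z) (m.map F^[k]) := by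
    rw [hF.map_iterate h0]
    exact (continuous_conj.measurable.aemeasurable.mul
      (hF.aemeasurable_iterate h0 (j - k))).aestronglyMeasurable
  calc ∫ z, conj (F^[k] z) * F^[j] z ∂m
      = ∫ z, conj (F^[k] z) * F^[j - k] (F^[k] z) ∂m := by
        simp only [← Function.iterate_add_apply, Nat.sub_add_cancel hkj.le]
    _ = ∫ z, conj z * F^[j - k] z ∂(m.map F^[k]) :=
        (integral_map (hF.aemeasurable_iterate h0 k) measurable_integrand).symm
    _ = ∫ z, conj z * F^[j - k] z ∂m := by rw [hF.map_iterate h0]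
    _ = deriv f 0 ^ (j - k) := hF.integral_conj_mul_iterate h0 (j - k)
end

section
/- Let f be an inner function with f(0)=0. Suppose for k=1,…,p, n_k and j_k are positive integers with max{n_k, j_k} < min{n_{k+1}, j_{k+1}} for each k=1,…,p−1. Then ∫_{∂𝔻} ∏_{k=1}^p f^{n_k}·conj(f^{j_k}) dm = ∏_{k=1}^p ∫_{∂𝔻} f^{n_k}·conj(f^{j_k}) dm. -/
open MeasureTheory Set Metric Filter Complex

/-!
A bounded analytic function on the disk, integrated over the circle, gives its value at `0`. Hence
the Fourier coefficients of `F = f|_{∂𝔻}` are those of the identity, that is, `F` preserves arc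
length. Likewise the integrals of `z⁻¹ F^k` are the values at `0` of `(f(w) / w) f(w)^(k - 1)` for
`k ≥ 1` and vanish for `k ≤ 0`; they say that the conditional expectation of `z⁻¹` given `F` is
`(deriv f 0) F⁻¹`, and this is all that is needed of the Aleksandrov disintegration. By iteration,
a block `F^[n] · conj F^[j]` has constant conditional expectation given `F^[max n j]`. All later
blocks are functions of `F^[max n j]`, so the blocks can be split off one at a time.
-/

open scoped Topology ENNReal

section Circle

noncomputable instance : MeasurableSpace Circle := borel Circle

instance : BorelSpace Circle := ⟨rfl⟩

@[fun_prop]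
theorem continuous_circle_coe : Continuous fun z : Circle => (z : ℂ) :=
  continuous_subtype_val

theorem measurableEmbedding_circle_coe : MeasurableEmbedding fun z : Circle => (z : ℂ) :=
  (continuous_circle_coe.isClosedEmbedding Circle.coe_injective).measurableEmbedding

/-- The Laurent monomial `z ^ k` as a continuous function on the circle; the analogue of `fourier`
for `Circle` in place of `AddCircle`. -/
noncomputable def circleMonomial (k : ℤ) : C(Circle, ℂ) where
  toFun z := (z ^ k : Circle)
  continuous_toFun := continuous_circle_coe.comp (continuous_zpow k)

theorem dense_span_range_circleMonomial :
    Dense (Submodule.span ℂ (range circleMonomial) : Set C(Circle, ℂ)) := by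
  let e : AddCircle (1 : ℝ) ≃ₜ Circle := AddCircle.homeomorphCircle one_ne_zero
  let Φ : C(AddCircle (1 : ℝ), ℂ) →L[ℂ] C(Circle, ℂ) :=
    { toLinearMap := (ContinuousMap.compRightAlgHom ℂ ℂ (e.symm : C(Circle, _))).toLinearMap
      cont := ContinuousMap.compRightAlgHom_continuous ℂ ℂ _ }
  have hΦ_surjective : Function.Surjective Φ := fun g =>
    ⟨g.comp e, ContinuousMap.ext fun z => congrArg g (e.apply_symm_apply z)⟩
  have hΦ_fourier : Φ ∘ fourier = circleMonomial := by
    funext k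
    ext z
    change (AddCircle.toCircle (k • e.symm z) : ℂ) = (z ^ k : Circle)
    rw [AddCircle.toCircle_zsmul, ← AddCircle.homeomorphCircle_apply one_ne_zero,
      e.apply_symm_apply]
  rw [Submodule.dense_iff_topologicalClosure_eq_top, ← hΦ_fourier, range_comp]
  have := hΦ_surjective.denseRange.topologicalClosure_map_submodule
    (span_fourier_closure_eq_top (T := 1))
  rwa [Submodule.map_span] at this

theorem dense_span_range_toLp_circleMonomial {p : ℝ≥0∞} [Fact (1 ≤ p)] (hp : p ≠ ∞)
    (μ : Measure Circle) [IsFiniteMeasure μ] :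
    Dense (Submodule.span ℂ (range fun k => ContinuousMap.toLp p μ ℂ (circleMonomial k)) :
      Set (Lp ℂ p μ)) := by
  have := (ContinuousMap.toLp_denseRange ℂ μ ℂ hp).topologicalClosure_map_submodule
    (Submodule.dense_iff_topologicalClosure_eq_top.1 dense_span_range_circleMonomial)
  rwa [Submodule.map_span, ← Submodule.dense_iff_topologicalClosure_eq_top,
    ContinuousLinearMap.coe_coe, ← range_comp] at this

theorem ext_of_integral_zpow {μ ν : Measure Circle} [IsFiniteMeasure μ] [IsFiniteMeasure ν]
    (h : ∀ k : ℤ, ∫ z, ((z ^ k : Circle) : ℂ) ∂μ = ∫ z, ((z ^ k : Circle) : ℂ) ∂ν) : μ = ν := by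
  let I (ρ : Measure Circle) [IsFiniteMeasure ρ] : C(Circle, ℂ) →L[ℂ] ℂ :=
    (L1.integralCLM' ℂ).comp (ContinuousMap.toLp 1 ρ ℂ)
  have hI (ρ : Measure Circle) [IsFiniteMeasure ρ] (g : C(Circle, ℂ)) : I ρ g = ∫ z, g z ∂ρ := by
    change L1.integralCLM' ℂ _ = _
    rw [← L1.integral_eq', L1.integral_eq_integral]
    exact integral_congr_ae (ContinuousMap.coeFn_toLp ρ g)
  have hIμν : I μ = I ν := ContinuousLinearMap.ext_on dense_span_range_circleMonomial <| by
    rintro _ ⟨k, rfl⟩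
    rw [hI, hI]
    exact h k
  refine ext_of_forall_integral_eq_of_IsFiniteMeasure fun g => ?_
  have := DFunLike.congr_fun hIμν ⟨fun z => (g z : ℂ), by fun_prop⟩
  simp only [hI, ContinuousMap.coe_mk, integral_complex_ofReal] at this
  exact_mod_cast this

variable {X : Type*} [MeasurableSpace X] {μ : Measure X}

theorem integrable_circle_coe [IsFiniteMeasure μ] {u : X → Circle} (hu : Measurable u) :
    Integrable (fun x => (u x : ℂ)) μ :=
  .of_bound (C := 1) (measurableEmbedding_circle_coe.measurable.comp hu).aestronglyMeasurable
    (ae_of_all _ fun _ => (Circle.norm_coe _).le)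

theorem integral_circle_coe_inv (u : X → Circle) :
    ∫ x, (((u x)⁻¹ : Circle) : ℂ) ∂μ = (starRingEnd ℂ) (∫ x, (u x : ℂ) ∂μ) := by
  simp only [Circle.coe_inv_eq_conj, integral_conj]

theorem integral_comp_of_measurePreserving {Y E : Type*} [MeasurableSpace Y]
    [NormedAddCommGroup E] [NormedSpace ℝ E] {ν : Measure Y} {F : X → Y}
    (hF : MeasurePreserving F μ ν) {g : Y → E} (hg : AEStronglyMeasurable g ν) :
    ∫ x, g (F x) ∂μ = ∫ y, g y ∂ν := by
  rw [← hF.map_eq] at hg ⊢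
  exact (integral_map hF.aemeasurable hg).symm

/-- A relation between Fourier coefficients extends to integrable functions, because both sides are
continuous functionals of `g` in `L¹`. -/
theorem integral_mul_comp_eq_of_integral_mul_zpow {ν : Measure Circle} [IsFiniteMeasure ν]
    {F : X → Circle} (hF : MeasurePreserving F μ ν) {φ : X → ℂ} (hφ : MemLp φ ∞ μ)
    {ψ : Circle → ℂ} (hψ : MemLp ψ ∞ ν)
    (h : ∀ k : ℤ, ∫ x, φ x * (F x ^ k : Circle) ∂μ = ∫ z, ψ z * (z ^ k : Circle) ∂ν)
    {g : Circle → ℂ} (hg : Integrable g ν) : ∫ x, φ x * g (F x) ∂μ = ∫ z, ψ z * g z ∂ν := by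
  let P := ContinuousLinearMap.mul ℂ ℂ
  let Λ₁ : Lp ℂ 1 ν →L[ℂ] ℂ := (P.lpPairing μ ∞ 1 (hφ.toLp φ)).comp
    (Lp.compMeasurePreservingₗᵢ ℂ F hF).toContinuousLinearMap
  let Λ₂ : Lp ℂ 1 ν →L[ℂ] ℂ := P.lpPairing ν ∞ 1 (hψ.toLp ψ)
  have hΛ₁ {q : Circle → ℂ} (hq : MemLp q 1 ν) : Λ₁ (hq.toLp q) = ∫ x, φ x * q (F x) ∂μ := by
    change P.lpPairing μ ∞ 1 (hφ.toLp φ) (Lp.compMeasurePreserving F hF (hq.toLp q)) = _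
    rw [Lp.toLp_compMeasurePreserving hq hF, ContinuousLinearMap.lpPairing_eq_integral]
    refine integral_congr_ae ?_
    filter_upwards [hφ.coeFn_toLp, (hq.comp_measurePreserving hF).coeFn_toLp] with x hx hx'
    simp [P, hx, hx']
  have hΛ₂ {q : Circle → ℂ} (hq : MemLp q 1 ν) : Λ₂ (hq.toLp q) = ∫ z, ψ z * q z ∂ν := by
    rw [ContinuousLinearMap.lpPairing_eq_integral]
    refine integral_congr_ae ?_
    filter_upwards [hψ.coeFn_toLp, hq.coeFn_toLp] with z hz hz'
    simp [P, hz, hz']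
  have hΛ : Λ₁ = Λ₂ := by
    refine ContinuousLinearMap.ext_on
      (dense_span_range_toLp_circleMonomial ENNReal.one_ne_top ν) ?_
    rintro _ ⟨k, rfl⟩
    have hk : MemLp (circleMonomial k) 1 ν :=
      memLp_one_iff_integrable.2 (integrable_circle_coe (measurable_id.pow_const k))
    exact (hΛ₁ hk).trans ((h k).trans (hΛ₂ hk).symm)
  have hg' : MemLp g 1 ν := memLp_one_iff_integrable.2 hg
  rw [← hΛ₁ hg', hΛ, hΛ₂ hg']

end Circle

section ArcMeasure

/-- Normalized arc length on `Circle`. Its image in the plane is `m`; carrying it on `Circle`, where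
`‖z‖ = 1` holds everywhere, lets boundary maps be iterated as self-maps of the circle. -/
noncomputable def arcMeasure : Measure Circle :=
  (ENNReal.ofReal (2 * Real.pi))⁻¹ •
    (volume.restrict (Ioc (0 : ℝ) (2 * Real.pi))).map Circle.exp

instance : IsProbabilityMeasure arcMeasure where
  measure_univ := by
    rw [arcMeasure, Measure.smul_apply, Measure.map_apply (by fun_prop) .univ]
    simp only [preimage_univ, Measure.restrict_apply_univ, Real.volume_Ioc, sub_zero, smul_eq_mul]
    exact ENNReal.inv_mul_cancel (by simpa using Real.pi_pos) ENNReal.ofReal_ne_top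

theorem map_coe_arcMeasure : arcMeasure.map (fun z : Circle => (z : ℂ)) = m := by
  rw [arcMeasure, Measure.map_smul, Measure.map_map (by fun_prop) (by fun_prop)]
  rfl

theorem integral_m_eq_integral_arcMeasure (g : ℂ → ℂ) :
    ∫ z, g z ∂m = ∫ z : Circle, g z ∂arcMeasure := by
  rw [← map_coe_arcMeasure, measurableEmbedding_circle_coe.integral_map]

theorem ae_m_iff {P : ℂ → Prop} : (∀ᵐ z ∂m, P z) ↔ ∀ᵐ z : Circle ∂arcMeasure, P z := by
  rw [← map_coe_arcMeasure, measurableEmbedding_circle_coe.ae_map_iff]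

theorem integral_arcMeasure_eq_circleAverage {g : ℂ → ℂ} (hg : ContinuousOn g (sphere 0 1)) :
    ∫ z : Circle, g z ∂arcMeasure = Real.circleAverage g 0 1 := by
  have hg' : Continuous fun z : Circle => g z :=
    hg.comp_continuous continuous_circle_coe fun z => by simp [Circle.norm_coe]
  rw [arcMeasure, integral_smul_measure,
    integral_map (by fun_prop) hg'.aestronglyMeasurable, Real.circleAverage_def,
    intervalIntegral.integral_of_le Real.two_pi_pos.le]
  simp [circleMap, Real.pi_pos.le]

end ArcMeasure

section RadialLimit

/-- `HasRadialLimit h H` says that `H` is a version of the boundary function of `h : 𝔻 → ℂ`: the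
radial limit of `h` at almost every `z` is `H z`. -/
def HasRadialLimit (h : ℂ → ℂ) (H : Circle → ℂ) : Prop :=
  ∀ᵐ z : Circle ∂arcMeasure, Tendsto (fun r : ℝ => h (r * z)) (𝓝[<] 1) (𝓝 (H z))

theorem ofReal_mul_circle_mem_ball {r : ℝ} (hr : r ∈ Ioo (0 : ℝ) 1) (z : Circle) :
    (r * z : ℂ) ∈ ball (0 : ℂ) 1 := by
  simpa [Circle.norm_coe, abs_of_pos hr.1] using hr.2

theorem tendsto_ofReal_mul_circle (z : Circle) :
    Tendsto (fun r : ℝ => (r * z : ℂ)) (𝓝[<] 1) (𝓝 z) := by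
  have : Continuous fun r : ℝ => (r * z : ℂ) := by fun_prop
  simpa using this.continuousWithinAt.tendsto (s := Iio 1) (x := 1)

theorem continuous_comp_ofReal_mul_circle {h : ℂ → ℂ} (hh : ContinuousOn h (ball 0 1)) {r : ℝ}
    (hr : r ∈ Ioo (0 : ℝ) 1) : Continuous fun z : Circle => h (r * z) :=
  hh.comp_continuous (by fun_prop) (ofReal_mul_circle_mem_ball hr)

theorem integral_comp_ofReal_mul_circle {h : ℂ → ℂ} (hh : DifferentiableOn ℂ h (ball 0 1)) {r : ℝ}
    (hr : r ∈ Ioo (0 : ℝ) 1) : ∫ z : Circle, h (r * z) ∂arcMeasure = h 0 := by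
  have hmaps : MapsTo (fun z : ℂ => r * z) (closedBall 0 1) (ball 0 1) := fun z hz => by
    rw [mem_closedBall_zero_iff] at hz
    rw [mem_ball_zero_iff, norm_mul, Complex.norm_real, Real.norm_of_nonneg hr.1.le]
    exact (mul_le_of_le_one_right hr.1.le hz).trans_lt hr.2
  have hd : DifferentiableOn ℂ (fun z => h (r * z)) (closedBall 0 1) :=
    hh.comp (by fun_prop) hmaps
  have hd' : DiffContOnCl ℂ (fun z => h (r * z)) (ball 0 |1|) := by
    refine DifferentiableOn.diffContOnCl ?_
    rwa [abs_one, closure_ball _ one_ne_zero]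
  rw [integral_arcMeasure_eq_circleAverage (g := fun z => h (r * z))
    (hd.continuousOn.mono sphere_subset_closedBall)]
  simpa using hd'.circleAverage

namespace HasRadialLimit

variable {h k : ℂ → ℂ} {H K : Circle → ℂ}

protected theorem id : HasRadialLimit (fun z => z) (fun z => z) :=
  ae_of_all _ tendsto_ofReal_mul_circle

protected theorem mul (hH : HasRadialLimit h H) (hK : HasRadialLimit k K) :
    HasRadialLimit (h * k) (H * K) := by
  filter_upwards [hH, hK] with z hz hz' using hz.mul hz'

protected theorem pow (hH : HasRadialLimit h H) (n : ℕ) : HasRadialLimit (h ^ n) (H ^ n) := by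
  filter_upwards [hH] with z hz using hz.pow n

protected theorem dslope (hH : HasRadialLimit h H) :
    HasRadialLimit (dslope h 0) (fun z => (z : ℂ)⁻¹ * (H z - h 0)) := by
  filter_upwards [hH] with z hz
  refine (((tendsto_ofReal_mul_circle z).inv₀ z.coe_ne_zero).mul (hz.sub_const (h 0))).congr' ?_
  filter_upwards [Ioo_mem_nhdsLT one_pos] with r hr
  have hrz : (r * z : ℂ) ≠ 0 := mul_ne_zero (by exact_mod_cast hr.1.ne') z.coe_ne_zero
  rw [dslope_of_ne _ hrz, slope_def_module, sub_zero, smul_eq_mul]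

theorem aemeasurable (hH : HasRadialLimit h H) (hh : ContinuousOn h (ball 0 1)) :
    AEMeasurable H arcMeasure := by
  obtain ⟨u, -, hu, hlim⟩ := exists_seq_strictMono_tendsto' (zero_lt_one (α := ℝ))
  have hu' : Tendsto u atTop (𝓝[<] 1) :=
    tendsto_nhdsWithin_iff.2 ⟨hlim, Eventually.of_forall fun k => (hu k).2⟩
  refine aemeasurable_of_tendsto_metrizable_ae atTop
    (fun k => (continuous_comp_ofReal_mul_circle hh (hu k)).measurable.aemeasurable) ?_
  filter_upwards [hH] with z hz using hz.comp hu'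

theorem integral_eq (hH : HasRadialLimit h H) (hh : DifferentiableOn ℂ h (ball 0 1)) {C : ℝ}
    (hC : ∀ w ∈ ball (0 : ℂ) 1, ‖h w‖ ≤ C) : ∫ z, H z ∂arcMeasure = h 0 := by
  have hIoo : ∀ᶠ r in 𝓝[<] (1 : ℝ), r ∈ Ioo (0 : ℝ) 1 := Ioo_mem_nhdsLT one_pos
  have hlim : Tendsto (fun r : ℝ => ∫ z : Circle, h (r * z) ∂arcMeasure) (𝓝[<] 1)
      (𝓝 (∫ z, H z ∂arcMeasure)) := by
    refine tendsto_integral_filter_of_dominated_convergence (fun _ => C) ?_ ?_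
      (integrable_const C) hH
    · filter_upwards [hIoo] with r hr
      exact (continuous_comp_ofReal_mul_circle hh.continuousOn hr).aestronglyMeasurable
    · filter_upwards [hIoo] with r hr
      exact ae_of_all _ fun z => hC _ (ofReal_mul_circle_mem_ball hr z)
  refine tendsto_nhds_unique hlim (tendsto_const_nhds.congr' ?_)
  filter_upwards [hIoo] with r hr using (integral_comp_ofReal_mul_circle hh hr).symm

end HasRadialLimit

end RadialLimit

/-- `F` is a boundary map of the inner function `f` with `f 0 = 0`. Unimodularity of the boundary
values is encoded by letting `F` take values in `Circle`. -/
structure IsInnerBoundaryMap (f : ℂ → ℂ) (F : Circle → Circle) : Prop where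
  differentiableOn : DifferentiableOn ℂ f (ball 0 1)
  mapsTo : MapsTo f (ball 0 1) (ball 0 1)
  map_zero : f 0 = 0
  measurable : Measurable F
  hasRadialLimit : HasRadialLimit f (fun z => F z)

namespace IsInnerBoundaryMap

variable {f : ℂ → ℂ} {F : Circle → Circle}

protected theorem id : IsInnerBoundaryMap (fun z => z) (fun z => z) where
  differentiableOn := differentiableOn_id
  mapsTo := mapsTo_id _
  map_zero := rfl
  measurable := measurable_id
  hasRadialLimit := .id

theorem norm_le_one (hF : IsInnerBoundaryMap f F) {w : ℂ} (hw : w ∈ ball (0 : ℂ) 1) : ‖f w‖ ≤ 1 :=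
  (mem_ball_zero_iff.1 (hF.mapsTo hw)).le

theorem norm_dslope_le_one (hF : IsInnerBoundaryMap f F) {w : ℂ} (hw : w ∈ ball (0 : ℂ) 1) :
    ‖dslope f 0 w‖ ≤ 1 := by
  have hmaps : MapsTo f (ball 0 1) (closedBall (f 0) 1) := fun w hw => by
    simpa [hF.map_zero] using hF.norm_le_one hw
  simpa using Complex.norm_dslope_le_div_of_mapsTo_ball hF.differentiableOn hmaps hw

theorem integral_mul_pow (hF : IsInnerBoundaryMap f F) {h : ℂ → ℂ} {H : Circle → ℂ}
    (hH : HasRadialLimit h H) (hh : DifferentiableOn ℂ h (ball 0 1)) {C : ℝ}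
    (hC : ∀ w ∈ ball (0 : ℂ) 1, ‖h w‖ ≤ C) (k : ℕ) :
    ∫ z, H z * (F z : ℂ) ^ k ∂arcMeasure = h 0 * 0 ^ k := by
  have hbound : ∀ w ∈ ball (0 : ℂ) 1, ‖(h * f ^ k) w‖ ≤ C := fun w hw => by
    rw [Pi.mul_apply, Pi.pow_apply, norm_mul, norm_pow]
    exact (mul_le_of_le_one_right (norm_nonneg _)
      (pow_le_one₀ (norm_nonneg _) (hF.norm_le_one hw))).trans (hC w hw)
  have hint := (hH.mul (hF.hasRadialLimit.pow k)).integral_eq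
    (hh.mul (hF.differentiableOn.pow k)) hbound
  simpa [hF.map_zero] using hint

theorem integral_zpow (hF : IsInnerBoundaryMap f F) (k : ℤ) :
    ∫ z, ((F z ^ k : Circle) : ℂ) ∂arcMeasure = if k = 0 then 1 else 0 := by
  have hpow (l : ℕ) : ∫ z, ((F z ^ l : Circle) : ℂ) ∂arcMeasure = 0 ^ l := by
    have hone : HasRadialLimit 1 1 := ae_of_all _ fun _ => tendsto_const_nhds
    simpa using hF.integral_mul_pow hone (differentiableOn_const 1) (C := 1) (by simp) l
  obtain ⟨l, rfl | rfl⟩ := k.eq_nat_or_neg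
  · simp only [zpow_natCast, hpow, zero_pow_eq, Nat.cast_eq_zero]
  · simp only [zpow_neg, zpow_natCast, integral_circle_coe_inv, hpow]
    simp [zero_pow_eq, apply_ite (starRingEnd ℂ)]

theorem integral_inv_mul_zpow (hF : IsInnerBoundaryMap f F) (k : ℤ) :
    ∫ z : Circle, (z : ℂ)⁻¹ * (F z ^ k : Circle) ∂arcMeasure = if k = 1 then deriv f 0 else 0 := by
  rcases le_or_gt k 0 with hk | hk
  · obtain ⟨l, rfl⟩ := Int.exists_eq_neg_ofNat hk
    have hconj := congrArg (starRingEnd ℂ) (hF.integral_mul_pow .id differentiableOn_id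
      (fun _ hw => (mem_ball_zero_iff.1 hw).le) l)
    rw [if_neg (by lia)]
    simpa [← integral_conj, ← Circle.coe_inv_eq_conj] using hconj
  · obtain ⟨l, rfl⟩ := Int.eq_succ_of_zero_lt hk
    have hdiff : DifferentiableOn ℂ (dslope f 0) (ball 0 1) :=
      (Complex.differentiableOn_dslope (ball_mem_nhds 0 one_pos)).2 hF.differentiableOn
    have hint := hF.integral_mul_pow hF.hasRadialLimit.dslope hdiff
      (fun _ => hF.norm_dslope_le_one) l
    have hpow (z : Circle) : (z : ℂ)⁻¹ * (F z ^ ((l : ℤ) + 1) : Circle)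
        = (z : ℂ)⁻¹ * (F z - f 0) * (F z : ℂ) ^ l := by
      rw [hF.map_zero, sub_zero, mul_assoc, ← pow_succ', ← Circle.coe_pow]
      norm_cast
    simp only [hpow, hint, dslope_same, zero_pow_eq]
    simp

theorem measurePreserving (hF : IsInnerBoundaryMap f F) :
    MeasurePreserving F arcMeasure arcMeasure := by
  have := Measure.isProbabilityMeasure_map (μ := arcMeasure) hF.measurable.aemeasurable
  refine ⟨hF.measurable, ext_of_integral_zpow fun k => ?_⟩
  calc ∫ z, ((z ^ k : Circle) : ℂ) ∂arcMeasure.map F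
      = ∫ z, ((F z ^ k : Circle) : ℂ) ∂arcMeasure :=
        integral_map hF.measurable.aemeasurable (circleMonomial k).continuous.aestronglyMeasurable
    _ = ∫ z, ((z ^ k : Circle) : ℂ) ∂arcMeasure := by
        rw [hF.integral_zpow, IsInnerBoundaryMap.id.integral_zpow]

/-- In terms of Aleksandrov–Clark measures: `∫ z⁻¹ dμ_α = (deriv f 0) α⁻¹` for almost every `α`. -/
theorem integral_inv_mul_comp (hF : IsInnerBoundaryMap f F) {g : Circle → ℂ}
    (hg : Integrable g arcMeasure) :
    ∫ z : Circle, (z : ℂ)⁻¹ * g (F z) ∂arcMeasure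
      = deriv f 0 * ∫ z : Circle, (z : ℂ)⁻¹ * g z ∂arcMeasure := by
  have hinv : MemLp (fun z : Circle => (z : ℂ)⁻¹) ∞ arcMeasure :=
    memLp_top_of_bound (by fun_prop) 1 (ae_of_all _ fun z => by simp [Circle.norm_coe])
  have hmom (k : ℤ) : ∫ z : Circle, (z : ℂ)⁻¹ * (F z ^ k : Circle) ∂arcMeasure
      = ∫ z : Circle, deriv f 0 * (z : ℂ)⁻¹ * (z ^ k : Circle) ∂arcMeasure := by
    simp only [mul_assoc, integral_const_mul, hF.integral_inv_mul_zpow,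
      IsInnerBoundaryMap.id.integral_inv_mul_zpow, deriv_id'', mul_ite, mul_one, mul_zero]
  simpa only [mul_assoc, integral_const_mul] using
    integral_mul_comp_eq_of_integral_mul_zpow hF.measurePreserving hinv (hinv.const_mul _) hmom hg

theorem integral_inv_mul_comp_iterate (hF : IsInnerBoundaryMap f F) (d : ℕ) {g : Circle → ℂ}
    (hg : Integrable g arcMeasure) :
    ∫ z : Circle, (z : ℂ)⁻¹ * g (F^[d] z) ∂arcMeasure
      = deriv f 0 ^ d * ∫ z : Circle, (z : ℂ)⁻¹ * g z ∂arcMeasure := by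
  induction d with
  | zero => simp
  | succ d ih =>
    have hgd := (hF.measurePreserving.iterate d).integrable_comp_of_integrable hg
    calc ∫ z : Circle, (z : ℂ)⁻¹ * g (F^[d + 1] z) ∂arcMeasure
        = deriv f 0 * ∫ z : Circle, (z : ℂ)⁻¹ * g (F^[d] z) ∂arcMeasure :=
          hF.integral_inv_mul_comp hgd
      _ = deriv f 0 ^ (d + 1) * ∫ z : Circle, (z : ℂ)⁻¹ * g z ∂arcMeasure := by
          rw [ih, pow_succ', mul_assoc]

theorem integral_div_mul_comp_iterate_add (hF : IsInnerBoundaryMap f F) (a d : ℕ) {H : Circle → ℂ}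
    (hH : Integrable H arcMeasure) :
    ∫ z, ((F^[a + d] z / F^[a] z : Circle) : ℂ) * H (F^[a + d] z) ∂arcMeasure
      = deriv f 0 ^ d * ∫ z, H z ∂arcMeasure := by
  have hcoe : Integrable (fun z : Circle => (z : ℂ) * H z) arcMeasure :=
    hH.bdd_mul (c := 1) (by fun_prop) (ae_of_all _ fun z => (Circle.norm_coe z).le)
  have hmeas : AEStronglyMeasurable (fun z : Circle => (z : ℂ)⁻¹ * (F^[d] z * H (F^[d] z)))
      arcMeasure :=
    AEStronglyMeasurable.mul (by fun_prop)
      ((hF.measurePreserving.iterate d).integrable_comp_of_integrable hcoe).aestronglyMeasurable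
  calc ∫ z, ((F^[a + d] z / F^[a] z : Circle) : ℂ) * H (F^[a + d] z) ∂arcMeasure
      = ∫ z, (F^[a] z : ℂ)⁻¹ * (F^[d] (F^[a] z) * H (F^[d] (F^[a] z))) ∂arcMeasure := by
        simp only [add_comm a d, Function.iterate_add_apply, Circle.coe_div]
        simp only [div_eq_inv_mul, mul_assoc]
    _ = ∫ z : Circle, (z : ℂ)⁻¹ * (F^[d] z * H (F^[d] z)) ∂arcMeasure :=
        integral_comp_of_measurePreserving (hF.measurePreserving.iterate a) hmeas
    _ = deriv f 0 ^ d * ∫ z : Circle, (z : ℂ)⁻¹ * (z * H z) ∂arcMeasure :=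
        hF.integral_inv_mul_comp_iterate d hcoe
    _ = deriv f 0 ^ d * ∫ z, H z ∂arcMeasure := by
        simp only [inv_mul_cancel_left₀ (Circle.coe_ne_zero _)]

theorem integral_div_mul_comp_iterate_of_le (hF : IsInnerBoundaryMap f F) {a b : ℕ} (hab : a ≤ b)
    {H : Circle → ℂ} (hH : Integrable H arcMeasure) :
    ∫ z, ((F^[b] z / F^[a] z : Circle) : ℂ) * H (F^[b] z) ∂arcMeasure
      = (∫ z, ((F^[b] z / F^[a] z : Circle) : ℂ) ∂arcMeasure) * ∫ z, H z ∂arcMeasure := by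
  obtain ⟨d, rfl⟩ := Nat.exists_eq_add_of_le hab
  have hone := hF.integral_div_mul_comp_iterate_add a d (integrable_const 1)
  simp only [mul_one, integral_const, probReal_univ, one_smul] at hone
  rw [hF.integral_div_mul_comp_iterate_add a d hH, hone]

theorem integral_div_mul_comp_iterate_max (hF : IsInnerBoundaryMap f F) (a b : ℕ)
    {H : Circle → ℂ} (hH : Integrable H arcMeasure) :
    ∫ z, ((F^[a] z / F^[b] z : Circle) : ℂ) * H (F^[max a b] z) ∂arcMeasure
      = (∫ z, ((F^[a] z / F^[b] z : Circle) : ℂ) ∂arcMeasure) * ∫ z, H z ∂arcMeasure := by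
  rcases le_total b a with hba | hab
  · rw [max_eq_left hba, hF.integral_div_mul_comp_iterate_of_le hba hH]
  · have hconj : Integrable (fun z => (starRingEnd ℂ) (H z)) arcMeasure :=
      (Complex.conjLIE.toContinuousLinearEquiv.toContinuousLinearMap).integrable_comp hH
    have := congrArg (starRingEnd ℂ) (hF.integral_div_mul_comp_iterate_of_le hab hconj)
    simpa only [max_eq_right hab, map_mul, ← integral_conj, ← Circle.coe_inv_eq_conj, inv_div,
      Complex.conj_conj] using this

theorem integral_prod_div_iterate (hF : IsInnerBoundaryMap f F) {p : ℕ} {n j : Fin p → ℕ}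
    (hsep : ∀ k l, k < l → max (n k) (j k) ≤ min (n l) (j l)) :
    ∫ z, ∏ k, ((F^[n k] z / F^[j k] z : Circle) : ℂ) ∂arcMeasure
      = ∏ k, ∫ z, ((F^[n k] z / F^[j k] z : Circle) : ℂ) ∂arcMeasure := by
  induction p with
  | zero => simp
  | succ p ih =>
    set M := max (n 0) (j 0)
    let H (z : Circle) : ℂ := ∏ k : Fin p, ((F^[n k.succ - M] z / F^[j k.succ - M] z : Circle) : ℂ)
    have hH : Integrable H arcMeasure := by
      have hmeas (i : ℕ) : Measurable F^[i] := hF.measurable.iterate i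
      have hcoe (z : Circle) :
          H z = (∏ k : Fin p, F^[n k.succ - M] z / F^[j k.succ - M] z : Circle) :=
        (map_prod Circle.coeHom
          (fun k : Fin p => F^[n k.succ - M] z / F^[j k.succ - M] z) Finset.univ).symm
      rw [funext hcoe]
      exact integrable_circle_coe (by fun_prop)
    have hHM (z : Circle) :
        H (F^[M] z) = ∏ k : Fin p, ((F^[n k.succ] z / F^[j k.succ] z : Circle) : ℂ) := by
      refine Finset.prod_congr rfl fun k _ => ?_
      have hk := le_min_iff.1 (hsep 0 k.succ k.succ_pos)
      rw [← Function.iterate_add_apply, ← Function.iterate_add_apply, Nat.sub_add_cancel hk.1,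
        Nat.sub_add_cancel hk.2]
    calc ∫ z, ∏ k, ((F^[n k] z / F^[j k] z : Circle) : ℂ) ∂arcMeasure
        = ∫ z, ((F^[n 0] z / F^[j 0] z : Circle) : ℂ) * H (F^[M] z) ∂arcMeasure := by
          simp only [Fin.prod_univ_succ, hHM]
      _ = (∫ z, ((F^[n 0] z / F^[j 0] z : Circle) : ℂ) ∂arcMeasure)
          * ∫ z, H (F^[M] z) ∂arcMeasure := by
          rw [hF.integral_div_mul_comp_iterate_max _ _ hH, integral_comp_of_measurePreserving
            (hF.measurePreserving.iterate M) hH.aestronglyMeasurable]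
      _ = ∏ k, ∫ z, ((F^[n k] z / F^[j k] z : Circle) : ℂ) ∂arcMeasure := by
          simp only [hHM, Fin.prod_univ_succ]
          rw [ih fun k l hkl => hsep _ _ (Fin.succ_lt_succ_iff.2 hkl)]

end IsInnerBoundaryMap

theorem exists_isInnerBoundaryMap {f F : ℂ → ℂ} (hf : DifferentiableOn ℂ f (ball 0 1))
    (hmap : MapsTo f (ball 0 1) (ball 0 1)) (h0 : f 0 = 0)
    (hlim : HasRadialLimit f (fun z => F z)) (hnorm : ∀ᵐ z : Circle ∂arcMeasure, ‖F z‖ = 1) :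
    ∃ G, IsInnerBoundaryMap f G ∧ ∀ᵐ z : Circle ∂arcMeasure, F z = G z := by
  have hF := hlim.aemeasurable hf.continuousOn
  let G (z : Circle) : Circle := Circle.exp (hF.mk _ z).arg
  have hG : Measurable G := Circle.exp.continuous.measurable.comp
    (Complex.measurable_arg.comp hF.measurable_mk)
  have hFG : ∀ᵐ z : Circle ∂arcMeasure, F z = G z := by
    filter_upwards [hF.ae_eq_mk, hnorm] with z hz hz'
    simpa [hz', Circle.coe_exp, ← hz, G] using (Complex.norm_mul_exp_arg_mul_I (F z)).symm
  refine ⟨G, ⟨hf, hmap, h0, hG, ?_⟩, hFG⟩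
  filter_upwards [hlim, hFG] with z hz hz' using hz' ▸ hz

theorem ae_iterate_apply_eq {X Y : Type*} [MeasurableSpace X] {μ : Measure X} {F : Y → Y}
    {G : X → X} {π : X → Y} (hG : Measure.QuasiMeasurePreserving G μ μ)
    (h : ∀ᵐ x ∂μ, F (π x) = π (G x)) (n : ℕ) : ∀ᵐ x ∂μ, F^[n] (π x) = π (G^[n] x) := by
  induction n with
  | zero => exact ae_of_all _ fun _ => rfl
  | succ n ih =>
    filter_upwards [h, hG.ae ih] with x hx hx'
    rw [Function.iterate_succ_apply, Function.iterate_succ_apply, hx, hx']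

theorem max_le_min_of_forall_succ {p : ℕ} {n j : Fin p → ℕ}
    (hsep : ∀ k : Fin p, ∀ h : (k : ℕ) + 1 < p,
      max (n k) (j k) ≤ min (n ⟨(k : ℕ) + 1, h⟩) (j ⟨(k : ℕ) + 1, h⟩))
    (k l : Fin p) (hkl : k < l) : max (n k) (j k) ≤ min (n l) (j l) := by
  rcases p with _ | p
  · exact k.elim0
  · let r (x y : ℕ × ℕ) : Prop := max x.1 x.2 ≤ min y.1 y.2
    have : IsTrans (ℕ × ℕ) r := ⟨fun _ _ _ hxy hyz => hxy.trans (min_le_max.trans hyz)⟩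
    exact (Fin.liftFun_iff_succ r (f := fun i => (n i, j i))).2
      (fun i => hsep i.castSucc (Nat.succ_lt_succ i.isLt)) hkl

theorem stmt4_general (f F : ℂ → ℂ)
    (hf : DifferentiableOn ℂ f (Metric.ball 0 1))
    (hmap : Set.MapsTo f (Metric.ball 0 1) (Metric.ball 0 1))
    (h0 : f 0 = 0)
    (hbd : ∀ᵐ z ∂m, Filter.Tendsto (fun r : ℝ => f ((r : ℂ) * z))
      (nhdsWithin 1 (Set.Iio 1)) (nhds (F z)))
    (hinner : ∀ᵐ z ∂m, ‖F z‖ = 1)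
    (p : ℕ) (n j : Fin p → ℕ)
    (hsep : ∀ k : Fin p, ∀ h : (k : ℕ) + 1 < p,
      max (n k) (j k) ≤ min (n ⟨(k : ℕ) + 1, h⟩) (j ⟨(k : ℕ) + 1, h⟩)) :
    ∫ z, ∏ k : Fin p, (F^[n k] z * (starRingEnd ℂ) (F^[j k] z)) ∂m
      = ∏ k : Fin p, ∫ z, F^[n k] z * (starRingEnd ℂ) (F^[j k] z) ∂m := by
  obtain ⟨G, hG, hFG⟩ := exists_isInnerBoundaryMap hf hmap h0 (ae_m_iff.1 hbd) (ae_m_iff.1 hinner)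
  have hiter : ∀ᵐ z : Circle ∂arcMeasure, ∀ k, F^[n k] z * (starRingEnd ℂ) (F^[j k] z)
      = (G^[n k] z / G^[j k] z : Circle) := by
    have hiter' (i : ℕ) : ∀ᵐ z : Circle ∂arcMeasure, F^[i] z = G^[i] z :=
      ae_iterate_apply_eq (π := fun z : Circle => (z : ℂ))
        hG.measurePreserving.quasiMeasurePreserving hFG i
    filter_upwards [ae_all_iff.2 hiter'] with z hz k
    rw [hz, hz, ← Circle.coe_inv_eq_conj, div_eq_mul_inv, Circle.coe_mul]
  simp only [integral_m_eq_integral_arcMeasure]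
  calc ∫ z : Circle, ∏ k, (F^[n k] z * (starRingEnd ℂ) (F^[j k] z)) ∂arcMeasure
      = ∫ z, ∏ k, ((G^[n k] z / G^[j k] z : Circle) : ℂ) ∂arcMeasure :=
        integral_congr_ae (hiter.mono fun z hz => Finset.prod_congr rfl fun k _ => hz k)
    _ = ∏ k, ∫ z, ((G^[n k] z / G^[j k] z : Circle) : ℂ) ∂arcMeasure :=
        hG.integral_prod_div_iterate (max_le_min_of_forall_succ hsep)
    _ = ∏ k, ∫ z : Circle, F^[n k] z * (starRingEnd ℂ) (F^[j k] z) ∂arcMeasure :=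
        Finset.prod_congr rfl fun k _ => integral_congr_ae (hiter.mono fun z hz => (hz k).symm)

theorem stmt4 (f F : ℂ → ℂ)
    (hf : DifferentiableOn ℂ f (Metric.ball 0 1))
    (hmap : Set.MapsTo f (Metric.ball 0 1) (Metric.ball 0 1))
    (h0 : f 0 = 0)
    (hbd : ∀ᵐ z ∂m, Filter.Tendsto (fun r : ℝ => f ((r : ℂ) * z))
      (nhdsWithin 1 (Set.Iio 1)) (nhds (F z)))
    (hinner : ∀ᵐ z ∂m, ‖F z‖ = 1)
    (p : ℕ) (hp : 0 < p) (n j : Fin p → ℕ)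
    (hn : ∀ k, 0 < n k) (hj : ∀ k, 0 < j k)
    (hsep : ∀ k : Fin p, ∀ h : (k : ℕ) + 1 < p,
      max (n k) (j k) < min (n ⟨(k : ℕ) + 1, h⟩) (j ⟨(k : ℕ) + 1, h⟩)) :
    ∫ z, ∏ k : Fin p, (F^[n k] z * (starRingEnd ℂ) (F^[j k] z)) ∂m
      = ∏ k : Fin p, ∫ z, F^[n k] z * (starRingEnd ℂ) (F^[j k] z) ∂m := by
  exact stmt4_general f F hf hmap h0 hbd hinner p n j fun k h => (hsep k h).le
end
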